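/- Let G = (V, E) be a finite simple graph with vertex set V = {1, …, n}, n ≥ 2, and adopt the chart setup: chart configurations P = (P_1, …, P_n) have every (3,4) entry of P_i equal to 1, and U is the set of chart configurations with every P_i of rank 3 and, for every edge {i,j}, nonzero (3,3) entry of 𝓕(P_i,P_j). For P ∈ U and e = {i,j} ∈ E set F̂_e = 𝓕(P_i,P_j) / [𝓕(P_i,P_j)]_{3,3}, and define the linear map D_P sending a tuple H = (H_1, …, H_n) of complex 3×4 matrices with vanishing (3,4) entries to the edge-indexed tuple (H_jᵀ F̂_e P_i + P_jᵀ F̂_e H_i + H_iᵀ F̂_eᵀ P_j + P_iᵀ F̂_eᵀ H_j)_{e={i,j}∈E} (this is the Jacobian of the system Φ_G^aff with respect to the camera variables at (P, F̂)). Then for a generic P ∈ U, the rank of D_P equals the rank of the derivative at P of the affine fundamental-matrix map 𝓕_G^aff given by (𝓕_G^aff(P))_e = 𝓕(P_i,P_j) / [𝓕(P_i,P_j)]_{3,3}. -/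

import Mathlib

open Matrix

attribute [local instance] Matrix.normedAddCommGroup Matrix.normedSpace

/-- The fundamental matrix of a camera pair `(P, Q)` of `3 × 4` matrices:
its `(h,k)` entry is `(-1)^(h+k)` times the determinant of the `4 × 4` matrix
obtained by stacking the rows of `P` other than row `k` (in their original order)
on top of the rows of `Q` other than row `h` (in their original order). -/
def fund {K : Type*} [CommRing K] (P Q : Matrix (Fin 3) (Fin 4) K) :
    Matrix (Fin 3) (Fin 3) K :=
  Matrix.of fun h k =>
    (-1 : K) ^ ((h : ℕ) + (k : ℕ)) *
      (Matrix.of fun r c : Fin 4 =>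
          if hr : (r : ℕ) < 2 then P (k.succAbove ⟨(r : ℕ), hr⟩) c
          else Q (h.succAbove ⟨(r : ℕ) - 2, by have := r.isLt; omega⟩) c).det

/-- A configuration on a graph with vertex set `{1, …, n}`: a tuple of `n`
complex `3 × 4` matrices. -/
abbrev Config (n : ℕ) := Fin n → Matrix (Fin 3) (Fin 4) ℂ

/-- The edges of a graph on `Fin n`, each represented by its unique ordered pair
`(i, j)` of adjacent vertices with `i < j`. -/
abbrev EdgeIdx {n : ℕ} (G : SimpleGraph (Fin n)) : Type :=
  {p : Fin n × Fin n // G.Adj p.1 p.2 ∧ p.1 < p.2}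

/-- The chart domain `U`: chart configurations (every `(3,4)` entry equal to `1`)
consisting of rank-3 cameras, such that on every edge the `(3,3)` entry of the
fundamental matrix is nonzero. -/
def chartDomain {n : ℕ} (G : SimpleGraph (Fin n)) : Set (Config n) :=
  {P | (∀ i, P i 2 3 = 1) ∧ (∀ i, (P i).rank = 3) ∧
    ∀ i j : Fin n, G.Adj i j → fund (P i) (P j) 2 2 ≠ 0}

/-- The normalized fundamental matrix `F̂_e` on the edge `e = {i,j}`: the
fundamental matrix `𝓕(Pᵢ, Pⱼ)` divided by its `(3,3)` entry. -/
noncomputable def Fhat {n : ℕ} (G : SimpleGraph (Fin n)) (P : Config n)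
    (e : EdgeIdx G) : Matrix (Fin 3) (Fin 3) ℂ :=
  (fund (P e.1.1) (P e.1.2) 2 2)⁻¹ • fund (P e.1.1) (P e.1.2)

/-- The affine fundamental-matrix map `𝓕_G^aff`: on each edge, the fundamental
matrix divided by its `(3,3)` entry. -/
noncomputable def Faff {n : ℕ} (G : SimpleGraph (Fin n)) (P : Config n) :
    EdgeIdx G → Matrix (Fin 3) (Fin 3) ℂ := fun e => Fhat G P e

/-- The tuples of `3 × 4` matrices whose `(3,4)` entries vanish: the directions
tangent to the chart configurations. -/
noncomputable def chartDirections (n : ℕ) : Submodule ℂ (Config n) where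
  carrier := {H | ∀ i, H i 2 3 = 0}
  add_mem' := by
    intro a b ha hb
    intro i
    simp [ha i, hb i]
  zero_mem' := by intro i; simp
  smul_mem' := by
    intro c a ha
    intro i
    simp [ha i]

/-- The Jacobian of the affine polynomial system `Φ_G^aff` with respect to the
camera variables at `(P, F̂)`, on all tuples of `3 × 4` matrices: it sends `H` to
the edge-indexed tuple
`(Hⱼᵀ F̂_e Pᵢ + Pⱼᵀ F̂_e Hᵢ + Hᵢᵀ F̂_eᵀ Pⱼ + Pᵢᵀ F̂_eᵀ Hⱼ)_{e={i,j}∈E}`. -/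
noncomputable def JPhat {n : ℕ} (G : SimpleGraph (Fin n)) (P : Config n) :
    Config n →ₗ[ℂ] (EdgeIdx G → Matrix (Fin 4) (Fin 4) ℂ) where
  toFun H := fun e =>
    (H e.1.2)ᵀ * Fhat G P e * P e.1.1 +
      (P e.1.2)ᵀ * Fhat G P e * H e.1.1 +
      (H e.1.1)ᵀ * (Fhat G P e)ᵀ * P e.1.2 +
      (P e.1.1)ᵀ * (Fhat G P e)ᵀ * H e.1.2
  map_add' H K := by
    funext e
    simp only [Pi.add_apply, Matrix.transpose_add, Matrix.add_mul, Matrix.mul_add]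
    abel
  map_smul' c H := by
    funext e
    simp only [Pi.smul_apply, Matrix.transpose_smul, Matrix.smul_mul,
      Matrix.mul_smul, RingHom.id_apply, smul_add]

/-- `D_P`: the above Jacobian restricted to tuples whose `(3,4)` entries vanish. -/
noncomputable def DP {n : ℕ} (G : SimpleGraph (Fin n)) (P : Config n) :
    chartDirections n →ₗ[ℂ] (EdgeIdx G → Matrix (Fin 4) (Fin 4) ℂ) :=
  (JPhat G P) ∘ₗ (chartDirections n).subtype

/-- The index set of the free entries of a chart configuration: all matrix
entries except the fixed `(3,4)` entry of each camera. -/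
abbrev FreeIdx (n : ℕ) : Type :=
  Fin n × {rc : Fin 3 × Fin 4 // rc ≠ ((2 : Fin 3), (3 : Fin 4))}

/-! Both linear maps have the same kernel, for every configuration in the chart domain. The epipolar
constraint `(Q x) ⬝ᵥ F (P x) = 0` holds identically in the cameras for `F = 𝓕(P, Q)`. The component
of `D_P H` at an edge is `A + Aᵀ` for a matrix `A`, and differentiating the constraint shows that
the quadratic form of `A` is minus `x ↦ (Pⱼ x) ⬝ᵥ M (Pᵢ x)`, where `M` is the component of the
derivative of `𝓕_G^aff` in the direction `H`. Hence `D_P H` vanishes at the edge iff `M` satisfies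
the epipolar constraint itself. Such `M` are proportional to `𝓕(Pᵢ, Pⱼ)`, and `M` has `(3,3)` entry
`0` because of the normalization, so this happens iff `M = 0`. -/

section LinearAlgebra

universe w

theorem rank_eq_of_ker_eq {R : Type*} {V : Type*} {W W' : Type w} [Ring R] [AddCommGroup V]
    [Module R V] [AddCommGroup W] [Module R W] [AddCommGroup W'] [Module R W'] {f : V →ₗ[R] W}
    {g : V →ₗ[R] W'} (h : LinearMap.ker f = LinearMap.ker g) :
    LinearMap.rank f = LinearMap.rank g :=
  (f.quotKerEquivRange.symm ≪≫ₗ Submodule.quotEquivOfEq _ _ h ≪≫ₗ g.quotKerEquivRange).rank_eq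

theorem add_transpose_eq_zero_iff {n R : Type*} [Fintype n] [CommRing R] [NoZeroDivisors R]
    [CharZero R] {A : Matrix n n R} : A + Aᵀ = 0 ↔ ∀ x, x ⬝ᵥ A *ᵥ x = 0 := by
  classical
  have isAlt_iff := LinearMap.isAlt_iff_eq_neg_flip (B := toLinearMap₂' R (S₁ := R) (S₂ := R) A)
  simp only [LinearMap.IsAlt, toLinearMap₂'_apply'] at isAlt_iff
  rw [isAlt_iff, LinearMap.ext_iff_basis (Pi.basisFun R n) (Pi.basisFun R n), ← Matrix.ext_iff]
  simp [eq_neg_iff_add_eq_zero, toLinearMap₂'_apply']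

theorem det_eq_zero_of_mulVec_eq_zero {n R : Type*} [Fintype n] [DecidableEq n] [CommRing R]
    {A : Matrix n n R} {v : n → R} (hv : A *ᵥ v = 0) {i : n} (hi : IsUnit (v i)) : A.det = 0 := by
  have h : A.det • v = 0 := by
    rw [← one_mulVec v, ← smul_mulVec, ← adjugate_mul, ← mulVec_mulVec, hv, mulVec_zero]
  exact hi.mul_left_eq_zero.mp (congrFun h i)

theorem mulVec_surjective_of_rank_eq_card {m n K : Type*} [Fintype m] [Fintype n] [Field K]
    {A : Matrix m n K} (hA : A.rank = Fintype.card m) : Function.Surjective A.mulVec := by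
  rw [← coe_mulVecLin, ← LinearMap.range_eq_top]
  exact Submodule.eq_top_of_finrank_eq (by rw [← rank, hA, Module.finrank_pi])

end LinearAlgebra

section Epipolar

/-- The epipolar constraint: the matrix `M` pairs the images `P x` and `Q x` of every point `x`
under the cameras `P` and `Q` to zero, i.e. the quadratic form of `Qᵀ * M * P` vanishes. -/
def IsEpipolar {l m n R : Type*} [Fintype l] [Fintype m] [Fintype n] [CommRing R]
    (P : Matrix m n R) (Q : Matrix l n R) (M : Matrix l m R) : Prop :=
  ∀ x : n → R, Q *ᵥ x ⬝ᵥ M *ᵥ (P *ᵥ x) = 0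

namespace IsEpipolar

section

variable {l m n R : Type*} [Fintype l] [Fintype m] [Fintype n] [CommRing R]
  {P : Matrix m n R} {Q : Matrix l n R} {M : Matrix l m R}

theorem transpose (hM : IsEpipolar P Q M) : IsEpipolar Q P Mᵀ := fun x => by
  rw [dotProduct_mulVec, vecMul_transpose, dotProduct_comm, hM x]

theorem smul (hM : IsEpipolar P Q M) (c : R) : IsEpipolar P Q (c • M) := fun x => by
  rw [smul_mulVec, dotProduct_smul, hM x, smul_zero]

theorem polarization (hM : IsEpipolar P Q M) (x y : n → R) :
    Q *ᵥ x ⬝ᵥ M *ᵥ (P *ᵥ y) + Q *ᵥ y ⬝ᵥ M *ᵥ (P *ᵥ x) = 0 := by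
  have hxy := hM (x + y)
  simp only [mulVec_add, dotProduct_add, add_dotProduct] at hxy
  linear_combination hxy - hM x - hM y

end

variable {l m : ℕ} {n R : Type*} [Fintype n] [CommRing R] {P : Matrix (Fin (m + 1)) n R}
  {Q : Matrix (Fin (l + 1)) n R} {M : Matrix (Fin (l + 1)) (Fin (m + 1)) R}

theorem apply_castSucc_last_eq_zero (hM : IsEpipolar P Q M)
    (hlast : M (Fin.last l) (Fin.last m) = 0) (hP : Function.Surjective P.mulVec)
    (hPQ : ∀ z : Fin l → R, ∃ x, Fin.init (P *ᵥ x) = 0 ∧ Fin.init (Q *ᵥ x) = z) (i : Fin l) :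
    M i.castSucc (Fin.last m) = 0 := by
  obtain ⟨x₀, hPx₀⟩ := hP (Pi.single (Fin.last m) 1)
  obtain ⟨x, hPx, hQx⟩ := hPQ (Pi.single i 1)
  have hPx_eq : P *ᵥ x = (P *ᵥ x) (Fin.last m) • P *ᵥ x₀ := by
    rw [hPx₀]
    ext j
    cases j using Fin.lastCases with
    | last => simp
    | cast j => simpa using! congrFun hPx j
  have hQx_apply (j : Fin l) : (Q *ᵥ x) j.castSucc = if j = i then 1 else 0 := by
    rw [← Pi.single_apply, ← hQx, Fin.init]
  calc M i.castSucc (Fin.last m)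
    _ = Q *ᵥ x ⬝ᵥ M *ᵥ (P *ᵥ x₀) := by
      simp [hPx₀, dotProduct, Fin.sum_univ_castSucc, hlast, hQx_apply]
    _ = -((P *ᵥ x) (Fin.last m) • (Q *ᵥ x₀ ⬝ᵥ M *ᵥ (P *ᵥ x₀))) := by
      rw [← dotProduct_smul, ← mulVec_smul, ← hPx_eq, eq_neg_iff_add_eq_zero, hM.polarization]
    _ = 0 := by rw [hM x₀, smul_zero, neg_zero]

theorem eq_zero (hM : IsEpipolar P Q M) (hlast : M (Fin.last l) (Fin.last m) = 0)
    (hP : Function.Surjective P.mulVec) (hQ : Function.Surjective Q.mulVec)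
    (hPQ : ∀ y z, ∃ x, Fin.init (P *ᵥ x) = y ∧ Fin.init (Q *ᵥ x) = z) : M = 0 := by
  have hcol (i : Fin l) : M i.castSucc (Fin.last m) = 0 :=
    hM.apply_castSucc_last_eq_zero hlast hP (hPQ 0) i
  have hrow (j : Fin m) : M (Fin.last l) j.castSucc = 0 :=
    hM.transpose.apply_castSucc_last_eq_zero hlast hQ
      (fun y => (hPQ y 0).imp fun _ => And.symm) j
  have hblock (i : Fin l) (j : Fin m) : M i.castSucc j.castSucc = 0 := by
    obtain ⟨x, hPx, hQx⟩ := hPQ (Pi.single j 1) (Pi.single i 1)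
    have hPx_apply (k : Fin m) : (P *ᵥ x) k.castSucc = if k = j then 1 else 0 := by
      rw [← Pi.single_apply, ← hPx, Fin.init]
    have hQx_apply (h : Fin l) : (Q *ᵥ x) h.castSucc = if h = i then 1 else 0 := by
      rw [← Pi.single_apply, ← hQx, Fin.init]
    have hx := hM x
    generalize P *ᵥ x = y, Q *ᵥ x = z at hx hPx_apply hQx_apply
    simpa [dotProduct, mulVec, Fin.sum_univ_castSucc (n := l), Fin.sum_univ_castSucc (n := m),
      hlast, hcol, hrow, hPx_apply, hQx_apply] using hx
  ext i j
  cases i using Fin.lastCases <;> cases j using Fin.lastCases <;> simp [hlast, hcol, hrow, hblock]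

end IsEpipolar

end Epipolar

section FundamentalMatrix

theorem fund_apply {R : Type*} [CommRing R] (P Q : Matrix (Fin 3) (Fin 4) R) (h k : Fin 3) :
    fund P Q h k = (-1 : R) ^ ((h : ℕ) + (k : ℕ)) *
      (of ![P (k.succAbove 0), P (k.succAbove 1), Q (h.succAbove 0), Q (h.succAbove 1)]).det := by
  rw [fund, of_apply]
  congr 2
  ext r c
  fin_cases r <;> rfl

/-- The block matrix with block rows `(y, 0, P)` and `(0, z, Q)`. For `y = P x` and `z = Q x` it is
singular, which encodes that both image points come from the same world point `x`. -/
def borderedStack {R : Type*} [CommRing R] (P Q : Matrix (Fin 3) (Fin 4) R) (y z : Fin 3 → R) :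
    Matrix (Fin 6) (Fin 6) R :=
  of (Fin.append (m := 3) (n := 3) (fun k => vecCons (y k) (vecCons 0 (P k)))
    fun h => vecCons 0 (vecCons (z h) (Q h)))

variable {R : Type*} [CommRing R] (P Q : Matrix (Fin 3) (Fin 4) R)

theorem borderedStack_submatrix_submatrix (y z : Fin 3 → R) (h k : Fin 3) :
    ((borderedStack P Q y z).submatrix (k.castAdd 3).succAbove Fin.succ).submatrix
        (h.natAdd 2).succAbove Fin.succ =
      of ![P (k.succAbove 0), P (k.succAbove 1), Q (h.succAbove 0), Q (h.succAbove 1)] := by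
  ext r c
  fin_cases h <;> fin_cases k <;> fin_cases r <;> rfl

theorem det_borderedStack_submatrix (y z : Fin 3 → R) (k : Fin 3) :
    (-1) ^ (k : ℕ) *
        ((borderedStack P Q y z).submatrix (k.castAdd 3).succAbove Fin.succ).det =
      ∑ h, z h * fund P Q h k := by
  set A := (borderedStack P Q y z).submatrix (k.castAdd 3).succAbove Fin.succ with hA
  have upper_entry (i : Fin 2) : A (i.castAdd 3) 0 = 0 := by
    fin_cases k <;> fin_cases i <;> rfl
  have lower_entry (h : Fin 3) : A (h.natAdd 2) 0 = z h := by
    fin_cases k <;> fin_cases h <;> rfl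
  have expansion : A.det = ∑ h : Fin 3,
      (-1) ^ (h : ℕ) * z h * (A.submatrix (h.natAdd 2).succAbove Fin.succ).det := by
    rw [det_succ_column_zero]
    refine (Fin.sum_univ_add (a := 2) (b := 3) _).trans ?_
    simp [-Fin.natAdd_eq_addNat, upper_entry, lower_entry, pow_add]
  rw [expansion, Finset.mul_sum]
  refine Finset.sum_congr rfl fun h _ => ?_
  rw [hA, borderedStack_submatrix_submatrix, fund_apply]
  ring

theorem det_borderedStack (y z : Fin 3 → R) :
    (borderedStack P Q y z).det = z ⬝ᵥ fund P Q *ᵥ y := by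
  have upper_entry (k : Fin 3) : borderedStack P Q y z (k.castAdd 3) 0 = y k := by
    simp [borderedStack]
  have lower_entry (h : Fin 3) : borderedStack P Q y z (h.natAdd 3) 0 = 0 := by
    simp [-Fin.natAdd_eq_addNat, borderedStack]
  calc (borderedStack P Q y z).det
    _ = ∑ k : Fin 3, (-1) ^ (k : ℕ) *
          ((borderedStack P Q y z).submatrix (k.castAdd 3).succAbove Fin.succ).det * y k := by
      rw [det_succ_column_zero]
      refine (Fin.sum_univ_add (a := 3) (b := 3) _).trans ?_
      simp [-Fin.natAdd_eq_addNat, upper_entry, lower_entry, mul_right_comm]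
    _ = z ⬝ᵥ fund P Q *ᵥ y := by
      simp_rw [det_borderedStack_submatrix, dotProduct_mulVec, dotProduct, vecMul, dotProduct]

theorem isEpipolar_fund : IsEpipolar P Q (fund P Q) := by
  intro x
  rw [← det_borderedStack]
  have hker : borderedStack P Q (P *ᵥ x) (Q *ᵥ x) *ᵥ vecCons (-1) (vecCons (-1) x) = 0 := by
    refine funext fun r => Fin.addCases (m := 3) (n := 3) (fun k => ?_) (fun h => ?_) r
    · simp [borderedStack, mulVec]
    · simp [-Fin.natAdd_eq_addNat, borderedStack, mulVec]
  exact det_eq_zero_of_mulVec_eq_zero hker (i := 0) isUnit_one.neg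

theorem exists_init_mulVec_eq {P Q : Matrix (Fin 3) (Fin 4) R} (hPQ : IsUnit (fund P Q 2 2))
    (y z : Fin 2 → R) : ∃ x, Fin.init (P *ᵥ x) = y ∧ Fin.init (Q *ᵥ x) = z := by
  rw [fund_apply] at hPQ
  obtain ⟨x, hx⟩ := mulVec_surjective_iff_isUnit.mpr
    ((isUnit_iff_isUnit_det _).mpr (isUnit_of_mul_isUnit_right hPQ))
    (Fin.append y z : Fin (2 + 2) → R)
  refine ⟨x, funext fun i => ?_, funext fun i => ?_⟩
  · have hxi := congrFun hx (i.castAdd 2)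
    rw [Fin.append_left] at hxi
    fin_cases i <;> exact hxi
  · have hxi := congrFun hx (i.natAdd 2)
    rw [Fin.append_right] at hxi
    fin_cases i <;> exact hxi

theorem IsEpipolar.eq_zero_of_apply_two_two_eq_zero {K : Type*} [Field K]
    {P Q : Matrix (Fin 3) (Fin 4) K} (hP : P.rank = 3) (hQ : Q.rank = 3) (hPQ : fund P Q 2 2 ≠ 0)
    {M : Matrix (Fin 3) (Fin 3) K} (hM : IsEpipolar P Q M) (hM₂₂ : M 2 2 = 0) : M = 0 :=
  hM.eq_zero hM₂₂ (mulVec_surjective_of_rank_eq_card hP) (mulVec_surjective_of_rank_eq_card hQ)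
    (exists_init_mulVec_eq hPQ.isUnit)

end FundamentalMatrix

section Calculus

variable {𝕜 : Type*} [NontriviallyNormedField 𝕜] {n : Type*} [Fintype n]

theorem hasDerivAt_dotProduct {u v : 𝕜 → n → 𝕜} {u' v' : n → 𝕜} {t : 𝕜} (hu : HasDerivAt u u' t)
    (hv : HasDerivAt v v' t) :
    HasDerivAt (fun s => u s ⬝ᵥ v s) (u' ⬝ᵥ v t + u t ⬝ᵥ v') t := by
  simp only [dotProduct, ← Finset.sum_add_distrib]
  exact .fun_sum fun i _ => (hasDerivAt_pi.1 hu i).mul (hasDerivAt_pi.1 hv i)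

theorem hasDerivAt_mulVec {m : Type*} [Finite m] {A : 𝕜 → Matrix m n 𝕜} {A' : Matrix m n 𝕜}
    {v : 𝕜 → n → 𝕜} {v' : n → 𝕜} {t : 𝕜} (hA : HasDerivAt A A' t) (hv : HasDerivAt v v' t) :
    HasDerivAt (fun s => A s *ᵥ v s) (A' *ᵥ v t + A t *ᵥ v') t :=
  have := Fintype.ofFinite m
  hasDerivAt_pi.2 fun i => hasDerivAt_dotProduct (hasDerivAt_pi.1 hA i) hv

theorem IsEpipolar.hasDerivAt_eq_zero {l m : Type*} [Fintype l] [Fintype m]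
    {P : 𝕜 → Matrix m n 𝕜} {P' : Matrix m n 𝕜} {Q : 𝕜 → Matrix l n 𝕜} {Q' : Matrix l n 𝕜}
    {M : 𝕜 → Matrix l m 𝕜} {M' : Matrix l m 𝕜} {t : 𝕜}
    (h : ∀ s, IsEpipolar (P s) (Q s) (M s)) (hP : HasDerivAt P P' t) (hQ : HasDerivAt Q Q' t)
    (hM : HasDerivAt M M' t) (x : n → 𝕜) :
    Q' *ᵥ x ⬝ᵥ M t *ᵥ (P t *ᵥ x) + Q t *ᵥ x ⬝ᵥ M' *ᵥ (P t *ᵥ x) +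
      Q t *ᵥ x ⬝ᵥ M t *ᵥ (P' *ᵥ x) = 0 := by
  have hx := hasDerivAt_const t x
  have hform := hasDerivAt_dotProduct (hasDerivAt_mulVec hQ hx)
    (hasDerivAt_mulVec hM (hasDerivAt_mulVec hP hx))
  simp only [h _ x, mulVec_zero, add_zero, dotProduct_add, ← add_assoc] at hform
  exact hform.unique (hasDerivAt_const t 0)

theorem differentiable_matrix_det {E : Type*} [NormedAddCommGroup E] [NormedSpace 𝕜 E]
    [DecidableEq n] {A : E → Matrix n n 𝕜} (hA : ∀ i j, Differentiable 𝕜 fun x => A x i j) :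
    Differentiable 𝕜 fun x => (A x).det := by
  simp only [det_apply]
  fun_prop

theorem differentiable_fund :
    Differentiable 𝕜 fun x : Matrix (Fin 3) (Fin 4) 𝕜 × Matrix (Fin 3) (Fin 4) 𝕜 =>
      fund x.1 x.2 := by
  refine differentiable_pi.2 fun h => differentiable_pi.2 fun k => ?_
  refine (differentiable_matrix_det fun r c => ?_).const_mul _
  simp only [of_apply]
  split_ifs <;> fun_prop

end Calculus

section AffineMap

variable {n : ℕ} {G : SimpleGraph (Fin n)} {P : Config n}

theorem isEpipolar_Fhat (e : EdgeIdx G) : IsEpipolar (P e.1.1) (P e.1.2) (Fhat G P e) :=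
  (isEpipolar_fund _ _).smul _

theorem JPhat_apply_eq_zero_iff {H : Config n} {e : EdgeIdx G} :
    JPhat G P H e = 0 ↔ ∀ x, H e.1.2 *ᵥ x ⬝ᵥ Fhat G P e *ᵥ (P e.1.1 *ᵥ x) +
      P e.1.2 *ᵥ x ⬝ᵥ Fhat G P e *ᵥ (H e.1.1 *ᵥ x) = 0 := by
  set A := (H e.1.2)ᵀ * Fhat G P e * P e.1.1 + (P e.1.2)ᵀ * Fhat G P e * H e.1.1 with hA
  have hJ : JPhat G P H e = A + Aᵀ := by
    simp only [hA, JPhat, LinearMap.coe_mk, AddHom.coe_mk, transpose_add, transpose_mul,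
      transpose_transpose, Matrix.mul_assoc]
    abel
  rw [hJ, add_transpose_eq_zero_iff]
  simp only [hA, add_mulVec, dotProduct_add, ← mulVec_mulVec, dotProduct_mulVec _ _ᵀ,
    vecMul_transpose]

theorem differentiableAt_fund_edge (e : EdgeIdx G) :
    DifferentiableAt ℂ (fun P : Config n => fund (P e.1.1) (P e.1.2)) P :=
  (differentiable_fund (𝕜 := ℂ)).differentiableAt.comp P
    (f := fun P : Config n => (P e.1.1, P e.1.2)) (by fun_prop)

theorem differentiableAt_fund_edge_two_two (e : EdgeIdx G) :
    DifferentiableAt ℂ (fun P : Config n => fund (P e.1.1) (P e.1.2) 2 2) P :=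
  differentiableAt_pi.1 (differentiableAt_pi.1 (differentiableAt_fund_edge e) 2) 2

theorem differentiableAt_Faff (hfund : ∀ e : EdgeIdx G, fund (P e.1.1) (P e.1.2) 2 2 ≠ 0) :
    DifferentiableAt ℂ (Faff G) P :=
  differentiableAt_pi.2 fun e =>
    ((differentiableAt_fund_edge_two_two e).inv (hfund e)).smul (differentiableAt_fund_edge e)

theorem fderiv_Faff_apply_two_two (hfund : ∀ e : EdgeIdx G, fund (P e.1.1) (P e.1.2) 2 2 ≠ 0)
    (H : Config n) (e : EdgeIdx G) : fderiv ℂ (Faff G) P H e 2 2 = 0 := by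
  have hentry : HasFDerivAt (fun P => Faff G P e 2 2) _ P :=
    hasFDerivAt_pi'.1 (hasFDerivAt_pi'.1
      (hasFDerivAt_pi'.1 (differentiableAt_Faff hfund).hasFDerivAt e) 2) 2
  have hconst : (fun P => Faff G P e 2 2) =ᶠ[nhds P] fun _ => 1 := by
    filter_upwards [(differentiableAt_fund_edge_two_two e).continuousAt.eventually_ne (hfund e)]
      with P' hP' using inv_mul_cancel₀ hP'
  exact DFunLike.congr_fun
    (hentry.unique ((hasFDerivAt_const 1 P).congr_of_eventuallyEq hconst)) H

theorem fderiv_Faff_apply_epipolar (hfund : ∀ e : EdgeIdx G, fund (P e.1.1) (P e.1.2) 2 2 ≠ 0)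
    (H : Config n) (e : EdgeIdx G) (x : Fin 4 → ℂ) :
    H e.1.2 *ᵥ x ⬝ᵥ Fhat G P e *ᵥ (P e.1.1 *ᵥ x) +
      P e.1.2 *ᵥ x ⬝ᵥ fderiv ℂ (Faff G) P H e *ᵥ (P e.1.1 *ᵥ x) +
      P e.1.2 *ᵥ x ⬝ᵥ Fhat G P e *ᵥ (H e.1.1 *ᵥ x) = 0 := by
  classical
  have hline : HasDerivAt (fun t : ℂ => P + t • H) H 0 :=
    (hasFDerivAt_id P).hasLineDerivAt H
  have hFaff : HasDerivAt (Faff G ∘ fun t : ℂ => P + t • H) (fderiv ℂ (Faff G) P H) 0 :=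
    (differentiableAt_Faff hfund).hasFDerivAt.hasLineDerivAt H
  simpa only [zero_smul, add_zero, Faff] using
    IsEpipolar.hasDerivAt_eq_zero (fun t => isEpipolar_Fhat (P := P + t • H) e)
      (hasDerivAt_pi.1 hline e.1.1) (hasDerivAt_pi.1 hline e.1.2) (hasDerivAt_pi.1 hFaff e) x

theorem JPhat_apply_eq_zero_iff_fderiv_Faff_apply_eq_zero
    (hrank : ∀ i j, G.Adj i j → (P i).rank = 3)
    (hfund : ∀ e : EdgeIdx G, fund (P e.1.1) (P e.1.2) 2 2 ≠ 0) {H : Config n} {e : EdgeIdx G} :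
    JPhat G P H e = 0 ↔ fderiv ℂ (Faff G) P H e = 0 := by
  have hderiv := fderiv_Faff_apply_epipolar hfund H e
  calc JPhat G P H e = 0
    _ ↔ IsEpipolar (P e.1.1) (P e.1.2) (fderiv ℂ (Faff G) P H e) := by
      rw [JPhat_apply_eq_zero_iff]
      exact forall_congr' fun x => by grind
    _ ↔ fderiv ℂ (Faff G) P H e = 0 :=
      ⟨fun h => h.eq_zero_of_apply_two_two_eq_zero (hrank _ _ e.2.1) (hrank _ _ e.2.1.symm)
        (hfund e) (fderiv_Faff_apply_two_two hfund H e), fun h x => by simp [h]⟩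

theorem ker_JPhat_eq_ker_fderiv_Faff (hrank : ∀ i j, G.Adj i j → (P i).rank = 3)
    (hfund : ∀ e : EdgeIdx G, fund (P e.1.1) (P e.1.2) 2 2 ≠ 0) :
    LinearMap.ker (JPhat G P) = LinearMap.ker (fderiv ℂ (Faff G) P).toLinearMap := by
  ext H
  exact funext_iff.trans <| (forall_congr' fun e =>
    JPhat_apply_eq_zero_iff_fderiv_Faff_apply_eq_zero hrank hfund).trans funext_iff.symm

end AffineMap

theorem generic_rank_DP_eq_rank_fderiv_Faff_general {n : ℕ} {G : SimpleGraph (Fin n)}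
    {P : Config n} (hrank : ∀ i j, G.Adj i j → (P i).rank = 3)
    (hfund : ∀ e : EdgeIdx G, fund (P e.1.1) (P e.1.2) 2 2 ≠ 0) (S : Submodule ℂ (Config n)) :
    LinearMap.rank (JPhat G P ∘ₗ S.subtype) =
      LinearMap.rank ((fderiv ℂ (Faff G) P).toLinearMap ∘ₗ S.subtype) :=
  rank_eq_of_ker_eq <| by
    rw [LinearMap.ker_comp, LinearMap.ker_comp, ker_JPhat_eq_ker_fderiv_Faff hrank hfund]

/-- for a generic configuration `P` in the chart domain `U`, the rank
of the Jacobian `D_P` of the system `Φ_G^aff` with respect to the camera variables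
equals the rank of the derivative at `P` of the affine fundamental-matrix map
`𝓕_G^aff` (restricted to tuples whose `(3,4)` entries vanish). -/
theorem generic_rank_DP_eq_rank_fderiv_Faff {n : ℕ} (hn : 2 ≤ n)
    (G : SimpleGraph (Fin n)) [DecidableRel G.Adj] :
    ∃ h : MvPolynomial (FreeIdx n) ℂ, h ≠ 0 ∧
      ∀ P ∈ chartDomain G,
        MvPolynomial.eval (fun v => P v.1 v.2.1.1 v.2.1.2) h ≠ 0 →
        LinearMap.rank (DP G P) =
          LinearMap.rank
            ((fderiv ℂ (Faff G) P).toLinearMap ∘ₗ (chartDirections n).subtype) := by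
  refine ⟨1, one_ne_zero, fun P ⟨_, hrank, hfund⟩ _ => ?_⟩
  exact generic_rank_DP_eq_rank_fderiv_Faff_general (fun i _ _ => hrank i)
    (fun e => hfund _ _ e.2.1) (chartDirections n)
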